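/- arXiv:q-alg/9710025 — 2 statements merged into one kernel-verified Lean document; each statement's English description precedes it below -/
import Mathlib

section
/- For all nonnegative integers N and M, Σ_{k∈ℤ} q^{k²+k} ( [N+M choose N+k]·[N+M choose N−k] − [N+M−1 choose N+k]·[N+M+1 choose N−k] ) = 1 if N = 0 and M = 0, and = 0 otherwise. (The sum has only finitely many nonzero terms.) -/
/-!
By the Gaussian binomial theorem, `∏_{i<L} (1 + q^(i+a) z) = ∑_n q^(n(n-1)/2 + a n) [L choose n] z^n`
(`coeff_gaussProd`). Comparing exponents, for all `A` and `B`,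
`∑_k q^(k²+k) [A choose N+k] [B choose N-k]` is `q^(-N²)` times the coefficient of `z^(2N)` in
`∏_{i<A} (1 + q^(i+1) z) * ∏_{i<B} (1 + q^i z)` (`pow_mul_sum_gauss`). For `N + M = L + 1`, the pairs
`(A, B) = (L+1, L+1)` and `(L, L+2)` give the same polynomial: the factor `1 + q^(L+1) z` only moves
from the first product to the second. So the two halves of the sum cancel. When `N = M = 0` the
second half vanishes and the first one is `1`.
-/

open Finset

noncomputable def qq : RatFunc ℚ := RatFunc.X

noncomputable def qPoch (n : ℕ) : RatFunc ℚ := ∏ i ∈ Finset.range n, (1 - qq ^ (i + 1))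

noncomputable def gauss (P N : ℤ) : RatFunc ℚ :=
  if 0 ≤ N ∧ N ≤ P then qPoch P.toNat / (qPoch N.toNat * qPoch (P - N).toNat) else 0

open Polynomial in
/-- The polynomial `∏_{i<L} (1 + q^(i+a) z)`, that is `(-q^a z; q)_L`. -/
noncomputable def gaussProd (a L : ℕ) : (RatFunc ℚ)[X] :=
  ∏ i ∈ Finset.range L, (1 + C (qq ^ (i + a)) * X)

lemma qq_ne_zero : qq ≠ 0 := RatFunc.X_ne_zero

lemma one_sub_qq_pow_ne_zero (n : ℕ) : 1 - qq ^ (n + 1) ≠ 0 := by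
  intro h
  have h1 : (Polynomial.X : Polynomial ℚ) ^ (n + 1) = 1 := by
    apply RatFunc.algebraMap_injective ℚ
    rw [map_pow, RatFunc.algebraMap_X, map_one]
    exact (sub_eq_zero.mp h).symm
  simpa using congrArg Polynomial.natDegree h1

lemma qPoch_succ (n : ℕ) : qPoch (n + 1) = qPoch n * (1 - qq ^ (n + 1)) :=
  Finset.prod_range_succ _ _

lemma qPoch_ne_zero (n : ℕ) : qPoch n ≠ 0 :=
  Finset.prod_ne_zero_iff.mpr fun i _ => one_sub_qq_pow_ne_zero i

lemma gauss_add (m n : ℕ) :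
    gauss ((m + n : ℕ) : ℤ) (n : ℤ) = qPoch (m + n) / (qPoch n * qPoch m) := by
  have h : ((m + n : ℕ) : ℤ) - (n : ℤ) = (m : ℤ) := by push_cast; ring
  rw [gauss, if_pos (by omega), h]
  simp only [Int.toNat_natCast]

lemma gauss_zero_right (L : ℕ) : gauss (L : ℤ) ((0 : ℕ) : ℤ) = 1 := by
  have h := gauss_add L 0
  rw [add_zero] at h
  rw [h, show qPoch 0 = 1 from rfl, one_mul, div_self (qPoch_ne_zero L)]

lemma gauss_self (L : ℕ) : gauss (L : ℤ) (L : ℤ) = 1 := by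
  have h := gauss_add 0 L
  rw [zero_add] at h
  rw [h, show qPoch 0 = 1 from rfl, mul_one, div_self (qPoch_ne_zero L)]

lemma gauss_of_lt {L n : ℕ} (h : L < n) : gauss (L : ℤ) (n : ℤ) = 0 :=
  if_neg (by omega)

/-- The `q`-Pascal rule, multiplied by `q^n` so that no exponent is negative when `L < n`. -/
lemma gauss_pascal (L n : ℕ) :
    qq ^ n * gauss ((L + 1 : ℕ) : ℤ) ((n + 1 : ℕ) : ℤ) =
      qq ^ n * gauss (L : ℤ) ((n + 1 : ℕ) : ℤ) + qq ^ L * gauss (L : ℤ) (n : ℤ) := by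
  rcases lt_trichotomy L n with h | rfl | h
  · rw [gauss_of_lt (by omega), gauss_of_lt (by omega), gauss_of_lt h]; simp
  · rw [gauss_self, gauss_self, gauss_of_lt (by omega)]; simp
  · obtain ⟨m, rfl⟩ : ∃ m, L = m + (n + 1) := ⟨L - (n + 1), by omega⟩
    have h1 := gauss_add (m + 1) (n + 1)
    have h2 := gauss_add m (n + 1)
    have h3 := gauss_add (m + 1) n
    rw [show m + 1 + (n + 1) = m + (n + 1) + 1 by ring] at h1
    rw [show m + 1 + n = m + (n + 1) by ring] at h3
    rw [h1, h2, h3, qPoch_succ (m + (n + 1)), qPoch_succ n, qPoch_succ m]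
    have := qPoch_ne_zero n
    have := qPoch_ne_zero m
    have := one_sub_qq_pow_ne_zero n
    have := one_sub_qq_pow_ne_zero m
    field_simp
    ring

/-- The Gaussian binomial theorem. -/
lemma coeff_gaussProd (a L n : ℕ) :
    (gaussProd a L).coeff n = qq ^ (n.choose 2 + a * n) * gauss (L : ℤ) (n : ℤ) := by
  induction L generalizing n with
  | zero =>
    rcases n with _ | n
    · rw [gauss_zero_right]; simp [gaussProd]
    · rw [gauss_of_lt (by omega)]; simp [gaussProd, Polynomial.coeff_one]
  | succ L ih =>
    have h : gaussProd a (L + 1) =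
        gaussProd a L + gaussProd a L * Polynomial.C (qq ^ (L + a)) * Polynomial.X := by
      rw [gaussProd, Finset.prod_range_succ, ← gaussProd]; ring
    rw [h, Polynomial.coeff_add]
    rcases n with _ | n
    · rw [Polynomial.coeff_mul_X_zero, ih, gauss_zero_right, gauss_zero_right]; simp
    · rw [Polynomial.coeff_mul_X, Polynomial.coeff_mul_C, ih, ih]
      have hc : (n + 1).choose 2 = n + n.choose 2 := by
        rw [Nat.choose_succ_succ' n 1, Nat.choose_one_right]
      rw [hc]
      linear_combination (-qq ^ (n.choose 2 + a * (n + 1))) * gauss_pascal L n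

lemma two_mul_choose_two (n : ℕ) : 2 * (n.choose 2 : ℤ) = n * (n - 1) := by
  induction n with
  | zero => simp
  | succ n ih =>
    rw [Nat.choose_succ_succ' n 1, Nat.choose_one_right]
    push_cast
    linear_combination ih

lemma pow_mul_sum_gauss (A B N : ℕ) :
    qq ^ (N ^ 2) * ∑ k ∈ Finset.Icc (-(N : ℤ)) N,
        qq ^ (k ^ 2 + k) * (gauss A ((N : ℤ) + k) * gauss B ((N : ℤ) - k)) =
      (gaussProd 1 A * gaussProd 0 B).coeff (2 * N) := by
  rw [Polynomial.coeff_mul, Finset.mul_sum]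
  symm
  refine Finset.sum_bij (fun p _ => (p.1 : ℤ) - N) ?_ ?_ ?_ ?_
  · rintro ⟨i, j⟩ h
    simp only [Finset.HasAntidiagonal.mem_antidiagonal, Finset.mem_Icc] at h ⊢
    omega
  · rintro ⟨i, j⟩ h ⟨i', j'⟩ h' e
    simp only [Finset.HasAntidiagonal.mem_antidiagonal, Prod.mk.injEq] at h h' e ⊢
    omega
  · intro k hk
    rw [Finset.mem_Icc] at hk
    refine ⟨(((N : ℤ) + k).toNat, ((N : ℤ) - k).toNat), ?_, ?_⟩
    · rw [Finset.HasAntidiagonal.mem_antidiagonal]; omega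
    · simp only; omega
  · rintro ⟨i, j⟩ h
    simp only [Finset.HasAntidiagonal.mem_antidiagonal] at h ⊢
    have hj : (j : ℤ) = 2 * N - i := by omega
    have e : qq ^ (N ^ 2) * qq ^ (((i : ℤ) - N) ^ 2 + ((i : ℤ) - N)) =
        qq ^ (i.choose 2 + 1 * i) * qq ^ (j.choose 2 + 0 * j) := by
      simp only [← zpow_natCast]
      rw [← zpow_add₀ qq_ne_zero, ← zpow_add₀ qq_ne_zero]
      congr 1
      have h1 := two_mul_choose_two i
      have h2 := two_mul_choose_two j
      rw [hj] at h2
      push_cast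
      apply mul_left_cancel₀ (two_ne_zero (α := ℤ))
      linear_combination -h1 - h2
    rw [coeff_gaussProd, coeff_gaussProd, show (N : ℤ) + (i - N) = i by ring,
      show (N : ℤ) - (i - N) = j by rw [hj]; ring]
    linear_combination (-gauss A i * gauss B j) * e

theorem stmt6 (N M : ℕ) :
    (Function.support fun k : ℤ =>
      qq ^ (k ^ 2 + k) *
        (gauss ((N : ℤ) + M) ((N : ℤ) + k) * gauss ((N : ℤ) + M) ((N : ℤ) - k) -
          gauss ((N : ℤ) + M - 1) ((N : ℤ) + k) * gauss ((N : ℤ) + M + 1) ((N : ℤ) - k))).Finite ∧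
    (∑ᶠ k : ℤ,
      qq ^ (k ^ 2 + k) *
        (gauss ((N : ℤ) + M) ((N : ℤ) + k) * gauss ((N : ℤ) + M) ((N : ℤ) - k) -
          gauss ((N : ℤ) + M - 1) ((N : ℤ) + k) * gauss ((N : ℤ) + M + 1) ((N : ℤ) - k))) =
      (if N = 0 ∧ M = 0 then 1 else 0) := by
  have hneg : ∀ (P : ℤ) {n : ℤ}, n < 0 → gauss P n = 0 := fun P n hn => if_neg (by omega)
  have hs : (Function.support fun k : ℤ =>
      qq ^ (k ^ 2 + k) *
        (gauss ((N : ℤ) + M) ((N : ℤ) + k) * gauss ((N : ℤ) + M) ((N : ℤ) - k) -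
          gauss ((N : ℤ) + M - 1) ((N : ℤ) + k) * gauss ((N : ℤ) + M + 1) ((N : ℤ) - k))) ⊆
      (Finset.Icc (-(N : ℤ)) N : Finset ℤ) := by
    intro k hk
    rw [Finset.mem_coe, Finset.mem_Icc]
    by_contra hc
    apply hk
    rcases lt_or_ge ((N : ℤ) + k) 0 with h | h
    · simp only [hneg _ h, zero_mul, sub_zero, mul_zero]
    · have h' : (N : ℤ) - k < 0 := by omega
      simp only [hneg _ h', sub_zero, mul_zero]
  refine ⟨(Finset.finite_toSet _).subset hs, ?_⟩
  rw [finsum_eq_sum_of_support_subset _ hs]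
  by_cases h0 : N = 0 ∧ M = 0
  · obtain ⟨rfl, rfl⟩ := h0
    have h1 : gauss 0 0 = 1 := by simpa using gauss_zero_right 0
    have h2 : gauss (-1) 0 = 0 := if_neg (by omega)
    simp [h1, h2]
  · rw [if_neg h0]
    obtain ⟨L, hL⟩ : ∃ L, N + M = L + 1 := ⟨N + M - 1, by omega⟩
    have e1 : (N : ℤ) + M = ((L + 1 : ℕ) : ℤ) := by exact_mod_cast hL
    have e2 : ((L + 1 : ℕ) : ℤ) - 1 = (L : ℤ) := by push_cast; ring
    have e3 : ((L + 1 : ℕ) : ℤ) + 1 = ((L + 2 : ℕ) : ℤ) := by push_cast; ring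
    have hprod : gaussProd 1 (L + 1) * gaussProd 0 (L + 1) =
        gaussProd 1 L * gaussProd 0 (L + 2) := by
      simp only [gaussProd, Finset.prod_range_succ]
      ring
    rw [e1, e2, e3]
    simp only [mul_sub, Finset.sum_sub_distrib]
    apply mul_left_cancel₀ (pow_ne_zero (N ^ 2) qq_ne_zero)
    rw [mul_sub, pow_mul_sum_gauss, pow_mul_sum_gauss, hprod, sub_self, mul_zero]
end

section
/- Let p and p′ be positive coprime integers and let (c1,c2,…,ct) be the continued fraction for (p′:p), with c_t ≥ 2. Let r_0 and s_0 be such that (c1,c2,…,c_{t−1}) is a continued fraction for (s_0:r_0). Then r_0 ≤ p/2 and s_0 ≤ p′/2, and (c1,c2,…,c_{t−1},c_t−1) is a continued fraction for the pair (p′−s_0 : p−r_0). -/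
/-!
A continued fraction `l` determines its pair `(s : r)` through the continuant recursion
`() ↦ (1, 0)`, `(c, l) ↦ (c * a + b, a)` where `l ↦ (a, b)` (`IsCF.contPair_eq`). Both coordinates
are affine in the last entry, with slope the pair of the shortened list (`contPair_append_succ`).
Hence subtracting `(s0, r0)` from `(p', p)` lowers the last entry by one, and
since that entry is at least `2`, `(s0, r0)` can be subtracted twice; this gives the two
inequalities.

It remains to see that the list with lowered last entry is again a continued fraction of the pair
it determines. A list whose entries after the first are positive and whose last entry is at least
`2` is the Euclidean expansion of its pair (`isCF_of_pos`, `isCF_cons`). If the lowered last entry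
equals `1`, it is first merged into its predecessor using `(…, e, 1) ~ (…, e + 1)`.
-/

open Finset

inductive IsCF : ℕ → ℕ → List ℕ → Prop
  | base : IsCF 1 0 []
  | step (s r c : ℕ) (cs : List ℕ) (hr : 0 < r) (h1 : c * r ≤ s) (h2 : s < (c + 1) * r)
      (h : IsCF r (s - c * r) cs) : IsCF s r (c :: cs)

def CFEquiv (l1 l2 : List ℕ) : Prop :=
  l1 = l2 ∨ (∃ ds e, l1 = ds ++ [e, 1] ∧ l2 = ds ++ [e + 1]) ∨
    (∃ ds e, l2 = ds ++ [e, 1] ∧ l1 = ds ++ [e + 1])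

def IsCFUpto (s r : ℕ) (cs : List ℕ) : Prop := ∃ cs', CFEquiv cs cs' ∧ IsCF s r cs'

def cfList (c : ℕ → ℕ) (t : ℕ) : List ℕ := (List.range t).map fun j => c (j + 1)

/-- The pair `(s, r)` whose continued fraction is the given list, by the continuant recursion. -/
def contPair : List ℕ → ℕ × ℕ
  | [] => (1, 0)
  | c :: l => (c * (contPair l).1 + (contPair l).2, (contPair l).1)

theorem IsCF.contPair_eq {s r : ℕ} {l : List ℕ} (h : IsCF s r l) :
    (contPair l).1 = s ∧ (contPair l).2 = r := by
  induction h with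
  | base => simp [contPair]
  | step s r c cs hr h1 h2 h ih =>
    simp only [contPair, ih.1, ih.2, and_true]
    omega

theorem contPair_append_succ (ds : List ℕ) (c : ℕ) :
    (contPair (ds ++ [c + 1])).1 = (contPair (ds ++ [c])).1 + (contPair ds).1 ∧
      (contPair (ds ++ [c + 1])).2 = (contPair (ds ++ [c])).2 + (contPair ds).2 := by
  induction ds with
  | nil => simp [contPair]
  | cons d ds ih =>
    simp only [List.cons_append, contPair, ih.1, ih.2, and_true]
    ring

theorem contPair_append_one (ds : List ℕ) (e : ℕ) :
    contPair (ds ++ [e, 1]) = contPair (ds ++ [e + 1]) := by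
  induction ds with
  | nil => simp [contPair]
  | cons d ds ih => simp only [List.cons_append, contPair, ih]

theorem CFEquiv.contPair_eq {l l' : List ℕ} (h : CFEquiv l l') : contPair l = contPair l' := by
  rcases h with rfl | ⟨ds, e, rfl, rfl⟩ | ⟨ds, e, rfl, rfl⟩
  · rfl
  · exact contPair_append_one ds e
  · exact (contPair_append_one ds e).symm

/-- Only the first entry of a continued fraction can vanish: later remainders satisfy `r ≤ s`. -/
theorem IsCF.pos_of_le {s r : ℕ} {l : List ℕ} (h : IsCF s r l) :
    r ≤ s → ∀ x ∈ l, 1 ≤ x := by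
  induction h with
  | base => simp
  | step s r c cs hr h1 h2 h ih =>
    intro hle x hx
    rcases List.mem_cons.1 hx with rfl | hx
    · by_contra! hc
      obtain rfl : x = 0 := by omega
      omega
    · refine ih ?_ x hx
      rw [add_mul] at h2
      omega

theorem isCF_singleton (m : ℕ) : IsCF m 1 [m] :=
  .step m 1 m [] one_pos (by omega) (by omega) (by simpa using IsCF.base)

theorem isCF_cons {a b : ℕ} {l : List ℕ} (c : ℕ) (h : IsCF a b l) (hab : b < a) :
    IsCF (c * a + b) a (c :: l) :=
  .step _ _ _ _ (by omega) (by omega) (by rw [add_mul]; omega) (by simpa using h)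

/-- The strict inequality is what makes `isCF_cons` applicable at the next step; it needs the last
entry to be at least `2`. -/
theorem isCF_of_pos (ds : List ℕ) (m : ℕ) (hds : ∀ x ∈ ds, 1 ≤ x) (hm : 2 ≤ m) :
    IsCF (contPair (ds ++ [m])).1 (contPair (ds ++ [m])).2 (ds ++ [m]) ∧
      0 < (contPair (ds ++ [m])).2 ∧ (contPair (ds ++ [m])).2 < (contPair (ds ++ [m])).1 := by
  induction ds with
  | nil => simpa [contPair] using ⟨isCF_singleton m, hm⟩
  | cons d ds ih =>
    obtain ⟨h1, h2, h3⟩ := ih fun x hx => hds x (List.mem_cons_of_mem _ hx)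
    have hd := hds d List.mem_cons_self
    refine ⟨isCF_cons d h1 h3, by simp only [List.cons_append, contPair]; omega, ?_⟩
    simp only [List.cons_append, contPair]
    nlinarith

theorem isCFUpto_of_pos (c : ℕ) (ds : List ℕ) (m : ℕ) (hds : ∀ x ∈ ds, 1 ≤ x) (hm : 1 ≤ m) :
    IsCFUpto (contPair (c :: ds ++ [m])).1 (contPair (c :: ds ++ [m])).2 (c :: ds ++ [m]) := by
  rcases hm.eq_or_lt with rfl | hm
  · rcases List.eq_nil_or_concat ds with rfl | ⟨ds, e, rfl⟩
    · exact ⟨[c + 1], .inr (.inl ⟨[], c, rfl, rfl⟩), by simpa [contPair] using isCF_singleton _⟩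
    · have he : 1 ≤ e := hds e (by simp)
      obtain ⟨h1, -, h3⟩ := isCF_of_pos ds (e + 1) (fun x hx => hds x (by simp [hx])) (by omega)
      have hl : c :: (ds ++ [e]) ++ [1] = (c :: ds) ++ [e, 1] := by simp
      simp only [List.concat_eq_append]
      rw [hl, contPair_append_one]
      exact ⟨c :: ds ++ [e + 1], .inr (.inl ⟨c :: ds, e, rfl, rfl⟩), isCF_cons c h1 h3⟩
  · obtain ⟨h1, -, h3⟩ := isCF_of_pos ds m hds hm
    exact ⟨_, .inl rfl, isCF_cons c h1 h3⟩

/-- The result for `(s0 : r0)` given by any representative of its continued fraction, so that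
the shortened list may end in `1`. -/
theorem sub_isCFUpto {p p' r0 s0 : ℕ} (ds : List ℕ) (k : ℕ)
    (hcf : IsCF p' p (ds ++ [k + 2])) (hcf0 : IsCFUpto s0 r0 ds) :
    2 * r0 ≤ p ∧ 2 * s0 ≤ p' ∧ IsCFUpto (p' - s0) (p - r0) (ds ++ [k + 1]) := by
  obtain ⟨ds', he, h0⟩ := hcf0
  obtain ⟨hs0, hr0⟩ := h0.contPair_eq
  rw [← he.contPair_eq] at hs0 hr0
  obtain ⟨hs, hr⟩ := hcf.contPair_eq
  rw [show k + 2 = k + 1 + 1 from rfl] at hs hr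
  obtain ⟨e1, e2⟩ := contPair_append_succ ds (k + 1)
  obtain ⟨e3, e4⟩ := contPair_append_succ ds k
  refine ⟨by omega, by omega, ?_⟩
  rw [show p' - s0 = (contPair (ds ++ [k + 1])).1 by omega,
    show p - r0 = (contPair (ds ++ [k + 1])).2 by omega]
  cases ds with
  | nil => exact ⟨_, .inl rfl, by simpa [contPair] using isCF_singleton _⟩
  | cons c ds =>
    refine isCFUpto_of_pos c ds (k + 1) (fun x hx => ?_) (by omega)
    cases hcf with
    | step _ _ _ _ hp h1 h2 h =>
      rw [add_mul] at h2
      exact h.pos_of_le (by omega) x (by simp [hx])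

theorem stmt14 (p p' r0 s0 : ℕ) (hp : 0 < p) (hp' : 0 < p') (hco : Nat.Coprime p' p)
    (cs : List ℕ) (hne : cs ≠ []) (hlast : 2 ≤ cs.getLast hne)
    (hcf : IsCF p' p cs) (hcf0 : IsCF s0 r0 cs.dropLast) :
    2 * r0 ≤ p ∧ 2 * s0 ≤ p' ∧
      IsCFUpto (p' - s0) (p - r0) (cs.dropLast ++ [cs.getLast hne - 1]) := by
  obtain ⟨k, hk⟩ := Nat.exists_eq_add_of_le' hlast
  rw [← List.dropLast_append_getLast hne, hk] at hcf
  rw [hk]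
  exact sub_isCFUpto cs.dropLast k hcf ⟨_, .inl rfl, hcf0⟩
end
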